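/- Let G be a group, f a nonzero homogeneous quasimorphism on G, and let G⁺ be the order semigroup of a bi-invariant partial order on G sandwiched by f. Then the dominant set of G⁺ equals {g ∈ G⁺ | f(g) > 0}. -/

import Mathlib

/-!
Up to an error bounded independently of `h`, `n` and `g`, the value `f (h ^ n * g⁻¹)` is
`n * f h - f g`. If `0 < f h`, this grows without bound in `n`, so some `h ^ n * g⁻¹` lies in the
superlevel set contained in `P`. Conversely, a nonzero `f` is unbounded above, so `g` can be chosen
with `f g` so large that `h ^ n * g⁻¹ ∈ P` forces `0 < n * f h`.
-/

section

variable {G : Type*} [DivInvMonoid G] {f : G → ℝ} {P : Set G} {h : G}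

/-- A homogeneous quasimorphism: a real-valued function `f` that is additive up to a bounded error
and satisfies `f (g ^ n) = n * f g`. The defect is not recorded, only that it is finite. -/
structure IsHomogeneousQuasimorphism (f : G → ℝ) : Prop where
  exists_abs_sub_le : ∃ D : ℝ, ∀ g h : G, |f (g * h) - f g - f h| ≤ D
  map_zpow (g : G) (n : ℤ) : f (g ^ n) = n * f g

/-- The set `P` is sandwiched by `f`: it lies between two superlevel sets of `f`. In the motivating
case `P` is the order semigroup of a bi-invariant partial order. -/
def IsSandwichedBy {α : Type*} (P : Set α) (f : α → ℝ) : Prop :=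
  ∃ C₁ C₂ : ℝ, {g : α | C₁ ≤ f g} ⊆ P ∧ P ⊆ {g : α | C₂ ≤ f g}

/-- The dominant set of `P`, written `G⁺⁺` when `P = G⁺` is an order semigroup: the nontrivial
elements of `P` that have, for each `g`, some power above `g`. -/
def dominantSet (P : Set G) : Set G :=
  {h | h ∈ P ∧ h ≠ 1 ∧ ∀ g : G, ∃ n : ℕ, h ^ n * g⁻¹ ∈ P}

namespace IsHomogeneousQuasimorphism

theorem map_pow (hf : IsHomogeneousQuasimorphism f) (g : G) (n : ℕ) : f (g ^ n) = n * f g := by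
  simpa using hf.map_zpow g n

theorem map_one (hf : IsHomogeneousQuasimorphism f) : f 1 = 0 := by
  simpa using hf.map_pow 1 0

theorem map_inv (hf : IsHomogeneousQuasimorphism f) (g : G) : f g⁻¹ = -f g := by
  simpa [zpow_neg_one] using hf.map_zpow g (-1)

theorem exists_map_pos (hf : IsHomogeneousQuasimorphism f) (hf0 : f ≠ 0) : ∃ g, 0 < f g := by
  obtain ⟨g, hg⟩ := Function.ne_iff.mp hf0
  rcases lt_or_gt_of_ne hg with hneg | hpos
  · exact ⟨g⁻¹, by rw [hf.map_inv]; exact neg_pos.mpr hneg⟩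
  · exact ⟨g, hpos⟩

theorem exists_lt_map (hf : IsHomogeneousQuasimorphism f) (hf0 : f ≠ 0) (C : ℝ) :
    ∃ g, C < f g := by
  obtain ⟨g, hg⟩ := hf.exists_map_pos hf0
  obtain ⟨n, hn⟩ := exists_lt_nsmul hg C
  exact ⟨g ^ n, by rwa [hf.map_pow, ← nsmul_eq_mul]⟩

theorem exists_abs_map_pow_mul_inv_sub_le (hf : IsHomogeneousQuasimorphism f) :
    ∃ D : ℝ, ∀ (h g : G) (n : ℕ), |f (h ^ n * g⁻¹) - (n * f h - f g)| ≤ D := by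
  obtain ⟨D, hD⟩ := hf.exists_abs_sub_le
  refine ⟨D, fun h g n ↦ ?_⟩
  calc |f (h ^ n * g⁻¹) - (n * f h - f g)|
      = |f (h ^ n * g⁻¹) - f (h ^ n) - f g⁻¹| := by rw [hf.map_pow, hf.map_inv]; ring_nf
    _ ≤ D := hD _ _

theorem exists_le_map_pow_mul_inv (hf : IsHomogeneousQuasimorphism f) (hh : 0 < f h) (g : G)
    (C : ℝ) : ∃ n : ℕ, C ≤ f (h ^ n * g⁻¹) := by
  obtain ⟨D, hD⟩ := hf.exists_abs_map_pow_mul_inv_sub_le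
  obtain ⟨n, hn⟩ := Archimedean.arch (C + f g + D) hh
  rw [nsmul_eq_mul] at hn
  have hlower : -D ≤ f (h ^ n * g⁻¹) - (n * f h - f g) := (abs_le.mp (hD h g n)).1
  exact ⟨n, by linarith⟩

theorem map_pos_of_forall_exists_le (hf : IsHomogeneousQuasimorphism f) (hf0 : f ≠ 0) {C : ℝ}
    (hC : ∀ g : G, ∃ n : ℕ, C ≤ f (h ^ n * g⁻¹)) : 0 < f h := by
  obtain ⟨D, hD⟩ := hf.exists_abs_map_pow_mul_inv_sub_le
  obtain ⟨g, hg⟩ := hf.exists_lt_map hf0 (D - C)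
  obtain ⟨n, hn⟩ := hC g
  have hupper : f (h ^ n * g⁻¹) - (n * f h - f g) ≤ D := (abs_le.mp (hD h g n)).2
  have hpos : 0 < n * f h := by linarith
  exact pos_of_mul_pos_right hpos n.cast_nonneg

end IsHomogeneousQuasimorphism

theorem dominants_eq_positive_part_general (hf : IsHomogeneousQuasimorphism f) (hf0 : f ≠ 0)
    (hP : IsSandwichedBy P f) : dominantSet P = {g | g ∈ P ∧ 0 < f g} := by
  obtain ⟨C₁, C₂, hlower, hupper⟩ := hP
  ext h
  constructor
  · rintro ⟨hmem, -, hdom⟩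
    exact ⟨hmem, hf.map_pos_of_forall_exists_le hf0 fun g ↦ (hdom g).imp fun _ hn ↦ hupper hn⟩
  · rintro ⟨hmem, hpos⟩
    have hne : h ≠ 1 := fun heq ↦ hpos.ne' (heq ▸ hf.map_one)
    exact ⟨hmem, hne, fun g ↦
      (hf.exists_le_map_pow_mul_inv hpos g C₁).imp fun _ hn ↦ hlower hn⟩

end

/-- Let `f` be a nonzero homogeneous quasimorphism on a group `G` and `G⁺`
the order semigroup of a bi-invariant partial order sandwiched by `f`.
Then the dominant set of `G⁺` equals `{g ∈ G⁺ | f(g) > 0}`. -/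
theorem dominants_eq_positive_part {G : Type*} [Group G] (f : G → ℝ)
    (hD : ∃ D : ℝ, ∀ g h : G, |f (g * h) - f g - f h| ≤ D)
    (hhom : ∀ (g : G) (n : ℤ), f (g ^ n) = n * f g)
    (hf0 : f ≠ 0)
    (P : Set G)
    (hone : (1 : G) ∈ P)
    (hmul : ∀ a ∈ P, ∀ b ∈ P, a * b ∈ P)
    (hconj : ∀ g : G, ∀ a ∈ P, g * a * g⁻¹ ∈ P)
    (hpointed : ∀ a ∈ P, a⁻¹ ∈ P → a = 1)
    (hsandwich : ∃ C₁ C₂ : ℝ, {g : G | C₁ ≤ f g} ⊆ P ∧ P ⊆ {g : G | C₂ ≤ f g}) :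
    {h : G | h ∈ P ∧ h ≠ 1 ∧ ∀ g : G, ∃ n : ℕ, h ^ n * g⁻¹ ∈ P}
      = {g : G | g ∈ P ∧ 0 < f g} :=
  dominants_eq_positive_part_general ⟨hD, hhom⟩ hf0 hsandwich
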